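/- arXiv:math-ph/0105040 — 7 statements merged into one kernel-verified Lean document; each statement's English description precedes it below -/
import Mathlib

section
/- Unitarity of the SU(2)-invariant Thirring model S-matrix: for every β ∈ ℂ with β ∉ πi·ℤ, one has S(β)·S(−β) = id as endomorphisms of ℂ² ⊗ ℂ² (equivalently, as 4×4 complex matrices indexed by (Fin 2) × (Fin 2)). -/
open scoped Matrix

/-- The scalar factor `S₀(β)` of the SU(2) ITM S-matrix. -/
noncomputable def S0 (β : ℂ) : ℂ :=
  Complex.Gamma (1/2 + β / (2 * Real.pi * Complex.I)) *
    Complex.Gamma (-β / (2 * Real.pi * Complex.I)) /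
  (Complex.Gamma (1/2 - β / (2 * Real.pi * Complex.I)) *
    Complex.Gamma (β / (2 * Real.pi * Complex.I)))

/-- The permutation operator `P` on `ℂ² ⊗ ℂ²`, with entries
`P_{(i,j),(k,l)} = δ_{i,l}·δ_{j,k}`. -/
def Pmat : Matrix (Fin 2 × Fin 2) (Fin 2 × Fin 2) ℂ :=
  fun p q => if p.1 = q.2 ∧ p.2 = q.1 then 1 else 0

/-- The S-matrix `S(β) = S₀(β)·(β·id − πi·P)/(β − πi)` of the SU(2)-invariant
Thirring model. -/
noncomputable def Smat (β : ℂ) : Matrix (Fin 2 × Fin 2) (Fin 2 × Fin 2) ℂ :=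
  (S0 β * (β - Real.pi * Complex.I)⁻¹) •
    (β • (1 : Matrix (Fin 2 × Fin 2) (Fin 2 × Fin 2) ℂ) -
      (Real.pi * Complex.I) • Pmat)

/-!
The S-matrix splits as `S(β) = S₀(β) • R(β)` with `R(β) = (β - πi P) / (β - πi)`, and both factors
are inverted by `β ↦ -β`. Negating `β` swaps numerator and denominator of `S₀`, which is nonzero
since none of its Gamma arguments is an integer. As `P² = 1`, the numerators of `R(β)` and `R(-β)`
multiply to `(πi)² - β²`, which is also the product of their denominators.
-/

theorem smul_one_sub_smul_mul_neg_smul_one_sub_smul {R A : Type*} [CommRing R] [Ring A]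
    [Algebra R A] {p : A} (hp : p * p = 1) (c β : R) :
    (β • (1 : A) - c • p) * ((-β) • (1 : A) - c • p) = ((β - c) * (-β - c)) • (1 : A) := by
  simp only [sub_mul, mul_sub, smul_mul_assoc, mul_smul_comm, hp, one_mul, mul_one]
  module

section YangRMatrix

variable {K A : Type*} [Field K] [Ring A] [Algebra K A]

/-- Yang's rational R-matrix `(β - c p) / (β - c)` with spectral parameter `β` and coupling `c`,
built from an element `p` of an arbitrary algebra; the intended `p` is a permutation operator.
At the pole `β = c` the junk value is `0`. -/
def yangR (p : A) (c β : K) : A :=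
  (β - c)⁻¹ • (β • (1 : A) - c • p)

theorem yangR_mul_yangR_neg {p : A} (hp : p * p = 1) {c β : K} (hβ : β ≠ c) (hβ' : β ≠ -c) :
    yangR p c β * yangR p c (-β) = 1 := by
  have hsub : β - c ≠ 0 := sub_ne_zero.mpr hβ
  have hneg : -β - c ≠ 0 := sub_ne_zero.mpr fun h => hβ' (neg_eq_iff_eq_neg.mp h)
  rw [yangR, yangR, smul_mul_smul_comm, smul_one_sub_smul_mul_neg_smul_one_sub_smul hp, smul_smul,
    ← mul_inv, inv_mul_cancel₀ (mul_ne_zero hsub hneg), one_smul]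

end YangRMatrix

theorem Pmat_eq_permMatrix : Pmat = Equiv.Perm.permMatrix ℂ (Equiv.prodComm (Fin 2) (Fin 2)) := by
  ext ⟨i, j⟩ ⟨k, l⟩
  simp [Pmat, Equiv.Perm.permMatrix, PEquiv.toMatrix_apply, and_comm]

theorem Pmat_mul_self : Pmat * Pmat = 1 := by
  have prodComm_mul_self :
      (Equiv.prodComm (Fin 2) (Fin 2) : Equiv.Perm (Fin 2 × Fin 2)) * Equiv.prodComm _ _ = 1 := rfl
  rw [Pmat_eq_permMatrix, ← Matrix.permMatrix_mul, prodComm_mul_self, Matrix.permMatrix_one]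

theorem Gamma_ne_zero_of_ne_intCast {s : ℂ} (hs : ∀ k : ℤ, s ≠ k) : Complex.Gamma s ≠ 0 :=
  Complex.Gamma_ne_zero fun m => by exact_mod_cast hs (-m)

theorem S0_neg (β : ℂ) : S0 (-β) = (S0 β)⁻¹ := by
  simp only [S0, inv_div, neg_div, neg_neg, sub_neg_eq_add, ← sub_eq_add_neg]

theorem S0_ne_zero {β : ℂ} (hβ : ∀ k : ℤ, β ≠ k * (Real.pi * Complex.I)) : S0 β ≠ 0 := by
  have two_mul_ne_intCast (k : ℤ) : 2 * (β / (2 * Real.pi * Complex.I)) ≠ k := fun h =>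
    hβ k (by rw [← h]; field_simp)
  rw [S0, neg_div]
  generalize β / (2 * Real.pi * Complex.I) = z at two_mul_ne_intCast
  have Gamma_half_add : Complex.Gamma (1 / 2 + z) ≠ 0 := Gamma_ne_zero_of_ne_intCast fun k h =>
    two_mul_ne_intCast (2 * k - 1) (by push_cast; linear_combination 2 * h)
  have Gamma_neg : Complex.Gamma (-z) ≠ 0 := Gamma_ne_zero_of_ne_intCast fun k h =>
    two_mul_ne_intCast (-2 * k) (by push_cast; linear_combination -2 * h)
  have Gamma_half_sub : Complex.Gamma (1 / 2 - z) ≠ 0 := Gamma_ne_zero_of_ne_intCast fun k h =>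
    two_mul_ne_intCast (1 - 2 * k) (by push_cast; linear_combination -2 * h)
  have Gamma_self : Complex.Gamma z ≠ 0 := Gamma_ne_zero_of_ne_intCast fun k h =>
    two_mul_ne_intCast (2 * k) (by push_cast; linear_combination 2 * h)
  exact div_ne_zero (mul_ne_zero Gamma_half_add Gamma_neg) (mul_ne_zero Gamma_half_sub Gamma_self)

theorem Smat_eq_S0_smul_yangR (β : ℂ) :
    Smat β = S0 β • yangR Pmat (Real.pi * Complex.I) β := by
  rw [Smat, yangR, smul_smul]

/-- Unitarity of the SU(2) ITM S-matrix: `S(β)·S(−β) = 1` for `β ∉ πi·ℤ`. -/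
theorem Smat_unitarity (β : ℂ) (hβ : ∀ k : ℤ, β ≠ (k : ℂ) * (Real.pi * Complex.I)) :
    Smat β * Smat (-β) = 1 := by
  have S0_mul_S0_neg : S0 β * S0 (-β) = 1 := by
    rw [S0_neg, mul_inv_cancel₀ (S0_ne_zero hβ)]
  have ne_pi_I : β ≠ Real.pi * Complex.I := by simpa using hβ 1
  have ne_neg_pi_I : β ≠ -(Real.pi * Complex.I) := by simpa using hβ (-1)
  rw [Smat_eq_S0_smul_yangR, Smat_eq_S0_smul_yangR, smul_mul_smul_comm, S0_mul_S0_neg,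
    yangR_mul_yangR_neg Pmat_mul_self ne_pi_I ne_neg_pi_I, one_smul]
end

section
/- Crossing symmetry of the SU(2)-invariant Thirring model S-matrix: for every β ∈ ℂ with β ∉ πi·ℤ, one has S(πi − β) = C₁ · (ᵗ¹S(β)) · C₁, where ᵗ¹ denotes partial transposition in the first tensor factor and C₁ = C ⊗ id. -/
open scoped Matrix Kronecker

/-- The charge conjugation matrix `C = [[0,1],[−1,0]]`. -/
def Cmat : Matrix (Fin 2) (Fin 2) ℂ := !![0, 1; -1, 0]

/-- `C₁ = C ⊗ id` on `ℂ² ⊗ ℂ²`. -/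
def C1 : Matrix (Fin 2 × Fin 2) (Fin 2 × Fin 2) ℂ :=
  Cmat ⊗ₖ (1 : Matrix (Fin 2) (Fin 2) ℂ)

/-- Partial transposition in the first tensor factor:
`(ᵗ¹T)_{(i,j),(k,l)} = T_{(k,j),(i,l)}`. -/
def ptransOne (T : Matrix (Fin 2 × Fin 2) (Fin 2 × Fin 2) ℂ) :
    Matrix (Fin 2 × Fin 2) (Fin 2 × Fin 2) ℂ :=
  fun p q => T (q.1, p.2) (p.1, q.2)

/-!
Since `C Aᵀ C = A - (tr A) 1` for every 2 × 2 matrix `A`, conjugating the partial transpose by `C₁`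
amounts to `T ↦ T - 1 ⊗ tr₁ T`. On the span of `1` and `P` it therefore acts by `1 ↦ 1 - 2 = -1` and
`P ↦ P - 1`, which sends `β - πi P` to `(πi - β) - πi P`. The scalar prefactor `S₀(β) / (β - πi)`
is invariant under `β ↦ πi - β`: in the variable `x = β / (2πi)` this reflection is `x ↦ 1/2 - x`,
and the Gamma factors are matched by the functional equation `Γ(z + 1) = z Γ(z)`.
-/

/-- The Gamma quotient `S₀` as a function of `x = β / (2πi)`. -/
noncomputable def gammaQuotient (x : ℂ) : ℂ :=
  Complex.Gamma (1 / 2 + x) * Complex.Gamma (-x) /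
    (Complex.Gamma (1 / 2 - x) * Complex.Gamma x)

theorem half_sub_mul_gammaQuotient_half_sub {x : ℂ} (hx : x ≠ 0) (hx_half : x ≠ 1 / 2) :
    (1 / 2 - x) * gammaQuotient (1 / 2 - x) = x * gammaQuotient x := by
  have hx_sub : x - 1 / 2 ≠ 0 := sub_ne_zero.mpr hx_half
  have gamma_one_sub : Complex.Gamma (1 / 2 + (1 / 2 - x)) = -x * Complex.Gamma (-x) := by
    rw [← Complex.Gamma_add_one _ (neg_ne_zero.mpr hx)]
    ring_nf
  have gamma_half_add : Complex.Gamma (1 / 2 + x) = (x - 1 / 2) * Complex.Gamma (x - 1 / 2) := by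
    rw [← Complex.Gamma_add_one _ hx_sub]
    ring_nf
  rw [gammaQuotient, gammaQuotient, gamma_one_sub, gamma_half_add, neg_sub, sub_sub_cancel]
  ring

theorem S0_eq_gammaQuotient (β : ℂ) :
    S0 β = gammaQuotient (β / (2 * Real.pi * Complex.I)) := by
  rw [S0, gammaQuotient, neg_div]

theorem pi_mul_I_sub_mul_S0_pi_mul_I_sub {β : ℂ} (hβ_zero : β ≠ 0)
    (hβ_pi : β ≠ Real.pi * Complex.I) :
    (Real.pi * Complex.I - β) * S0 (Real.pi * Complex.I - β) = β * S0 β := by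
  obtain ⟨x, rfl⟩ : ∃ x, β = 2 * Real.pi * Complex.I * x :=
    ⟨_, (mul_div_cancel₀ β Complex.two_pi_I_ne_zero).symm⟩
  have hx : x ≠ 0 := right_ne_zero_of_mul hβ_zero
  have hx_half : x ≠ 1 / 2 := by
    rintro rfl
    exact hβ_pi (by ring)
  have reflect : Real.pi * Complex.I - 2 * Real.pi * Complex.I * x =
      2 * Real.pi * Complex.I * (1 / 2 - x) := by ring
  simp only [reflect, S0_eq_gammaQuotient, mul_div_cancel_left₀ _ Complex.two_pi_I_ne_zero,
    mul_assoc _ _ (gammaQuotient _), half_sub_mul_gammaQuotient_half_sub hx hx_half]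

theorem S0_mul_inv_pi_mul_I_sub {β : ℂ} (hβ_zero : β ≠ 0) (hβ_pi : β ≠ Real.pi * Complex.I) :
    S0 (Real.pi * Complex.I - β) * (Real.pi * Complex.I - β - Real.pi * Complex.I)⁻¹ =
      S0 β * (β - Real.pi * Complex.I)⁻¹ := by
  have hβ_sub : β - Real.pi * Complex.I ≠ 0 := sub_ne_zero.mpr hβ_pi
  rw [sub_sub_cancel_left, ← div_eq_mul_inv, ← div_eq_mul_inv,
    div_eq_div_iff (neg_ne_zero.mpr hβ_zero) hβ_sub]
  linear_combination -pi_mul_I_sub_mul_S0_pi_mul_I_sub hβ_zero hβ_pi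

section PartialTrace

variable {R l m n p q : Type*} [Fintype m]

/-- The partial trace `tr₁` over the first tensor factor: its `(j, k)` entry is the trace of the
block of `T` with second indices `j` and `k`. -/
def partialTraceOne [Semiring R] : Matrix (m × n) (m × n) R →ₗ[R] Matrix n n R where
  toFun T := Matrix.of fun j k => (T.submatrix (·, j) (·, k)).trace
  map_add' S T := by
    ext j k
    exact Matrix.trace_add (S.submatrix (·, j) (·, k)) (T.submatrix (·, j) (·, k))
  map_smul' c T := by
    ext j k
    exact Matrix.trace_smul c (T.submatrix (·, j) (·, k))

theorem partialTraceOne_one [Semiring R] [DecidableEq m] [DecidableEq n] :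
    partialTraceOne (1 : Matrix (m × n) (m × n) R) = (Fintype.card m : R) • 1 := by
  ext j k
  simp [partialTraceOne, Matrix.trace, Matrix.one_apply]

theorem submatrix_kronecker_one_mul_mul_kronecker_one [NonAssocSemiring R] [Fintype p] [Fintype n]
    [DecidableEq n] (A : Matrix l m R) (T : Matrix (m × n) (p × n) R) (B : Matrix p q R) (j k : n) :
    ((A ⊗ₖ (1 : Matrix n n R)) * T * (B ⊗ₖ (1 : Matrix n n R))).submatrix (·, j) (·, k) =
      A * T.submatrix (·, j) (·, k) * B := by
  ext
  simp [Matrix.mul_apply, Fintype.sum_prod_type, Matrix.one_apply]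

end PartialTrace

theorem partialTraceOne_Pmat : partialTraceOne Pmat = 1 := by
  ext j l
  fin_cases j <;> fin_cases l <;> simp [partialTraceOne, Matrix.trace, Pmat]

theorem Cmat_mul_transpose_mul_Cmat (A : Matrix (Fin 2) (Fin 2) ℂ) :
    Cmat * Aᵀ * Cmat = A - A.trace • 1 := by
  ext i k
  simp only [Matrix.mul_apply, Fin.sum_univ_two]
  fin_cases i <;> fin_cases k <;> simp [Cmat, Matrix.trace_fin_two]

theorem ptransOne_smul (c : ℂ) (T : Matrix (Fin 2 × Fin 2) (Fin 2 × Fin 2) ℂ) :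
    ptransOne (c • T) = c • ptransOne T :=
  rfl

theorem C1_mul_ptransOne_mul_C1 (T : Matrix (Fin 2 × Fin 2) (Fin 2 × Fin 2) ℂ) :
    C1 * ptransOne T * C1 = T - (1 : Matrix (Fin 2) (Fin 2) ℂ) ⊗ₖ partialTraceOne T := by
  ext ⟨i, j⟩ ⟨k, l⟩
  let block := T.submatrix (·, j) (·, l)
  calc (C1 * ptransOne T * C1) (i, j) (k, l)
      = (Cmat * blockᵀ * Cmat) i k :=
        congr_fun₂ (submatrix_kronecker_one_mul_mul_kronecker_one Cmat (ptransOne T) Cmat j l) i k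
    _ = (block - block.trace • 1) i k := by rw [Cmat_mul_transpose_mul_Cmat]
    _ = (T - (1 : Matrix (Fin 2) (Fin 2) ℂ) ⊗ₖ partialTraceOne T) (i, j) (k, l) := by
        simp [block, partialTraceOne, mul_comm]

theorem C1_mul_ptransOne_smul_one_sub_smul_Pmat_mul_C1 (a b : ℂ) :
    C1 * ptransOne (a • 1 - b • Pmat) * C1 = (b - a) • 1 - b • Pmat := by
  have partialTrace_eq : partialTraceOne (a • 1 - b • Pmat) = (2 * a - b) • 1 := by
    rw [map_sub, map_smul, map_smul, partialTraceOne_one, partialTraceOne_Pmat, Fintype.card_fin]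
    module
  rw [C1_mul_ptransOne_mul_C1, partialTrace_eq, Matrix.kronecker_smul, Matrix.one_kronecker_one]
  module

/-- Crossing symmetry of the SU(2) ITM S-matrix:
`S(πi − β) = C₁ · ᵗ¹S(β) · C₁` for `β ∉ πi·ℤ`. -/
theorem Smat_crossing (β : ℂ) (hβ : ∀ k : ℤ, β ≠ (k : ℂ) * (Real.pi * Complex.I)) :
    Smat (Real.pi * Complex.I - β) = C1 * ptransOne (Smat β) * C1 := by
  have hβ_zero : β ≠ 0 := by simpa using hβ 0
  have hβ_pi : β ≠ Real.pi * Complex.I := by simpa using hβ 1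
  rw [Smat, Smat, S0_mul_inv_pi_mul_I_sub hβ_zero hβ_pi, ptransOne_smul, Matrix.mul_smul,
    Matrix.smul_mul, C1_mul_ptransOne_smul_one_sub_smul_Pmat_mul_C1]
end

section
/- Antisymmetrization lemma: let r, ℓ be integers with 0 ≤ r < ℓ, let B be a nonzero complex number, and let A_{r+1},…,A_ℓ be nonzero complex numbers. Then ∑_{σ} sgn(σ)·∏_{a=r+1}^{ℓ} A_{σ(a)}^{−2a} = (−1)^{ℓ−r−1} · ∑_{σ} sgn(σ)·[ ∏_{a=r+1}^{ℓ−1}(1 − A_{σ(a)}²·B⁻²) · A_{σ(ℓ)}^{−2(r+1)} · ∏_{a=r+1}^{ℓ−1} A_{σ(a)}^{−2a−2} ], where both sums run over all permutations σ of the index set {r+1,…,ℓ}. -/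
open Finset Equiv

/-!
Both sides are determinants. In `V i j = A i ^ (-2 * (r + 1 + j))`, subtracting `B⁻²` times the
preceding column from every column but the first preserves the determinant and turns column
`j + 1` into `(1 - A i ^ 2 * B⁻²) * A i ^ (-2 * (r + 1 + j) - 2)`. Moving the untouched first
column to the last place is a cyclic permutation of `ℓ - r` columns, of sign `(-1) ^ (ℓ - r - 1)`.
-/

section CommRing

variable {R : Type*} [CommRing R] {m : ℕ}

theorem det_of_snoc_eq_neg_one_pow_mul_det_of_cons (u : Fin (m + 1) → R)
    (v : Fin (m + 1) → Fin m → R) :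
    (Matrix.of fun i => (Fin.snoc (v i) (u i) : Fin (m + 1) → R)).det =
      (-1) ^ m * (Matrix.of fun i => (Fin.cons (u i) (v i) : Fin (m + 1) → R)).det := by
  set N := Matrix.of fun i => (Fin.cons (u i) (v i) : Fin (m + 1) → R)
  have snoc_eq_submatrix : (Matrix.of fun i => (Fin.snoc (v i) (u i) : Fin (m + 1) → R)) =
      N.submatrix id (finRotate (m + 1)) := by
    ext i j
    simp [N, Fin.snoc_eq_cons_rotate]
  rw [snoc_eq_submatrix, Matrix.det_permute', sign_finRotate]
  simp

theorem det_of_cons_zero_succ_sub_castSucc (M : Matrix (Fin (m + 1)) (Fin (m + 1)) R)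
    (c : Fin m → R) :
    (Matrix.of fun i => (Fin.cons (M i 0) fun k => M i k.succ - c k * M i k.castSucc :
      Fin (m + 1) → R)).det = M.det :=
  (Matrix.det_eq_of_forall_col_eq_smul_add_pred c (by simp) (by simp)).symm

theorem sum_sign_mul_prod_eq_neg_one_pow_mul_sum_succ_sub_castSucc
    (M : Matrix (Fin (m + 1)) (Fin (m + 1)) R) (c : Fin m → R) :
    ∑ σ : Perm (Fin (m + 1)), ((Perm.sign σ : ℤ) : R) * ∏ a, M (σ a) a =
      (-1) ^ m * ∑ σ : Perm (Fin (m + 1)), ((Perm.sign σ : ℤ) : R) *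
        ((∏ k : Fin m, (M (σ k.castSucc) k.succ - c k * M (σ k.castSucc) k.castSucc)) *
          M (σ (Fin.last m)) 0) := by
  have det_eq := det_of_snoc_eq_neg_one_pow_mul_det_of_cons (fun i => M i 0)
    fun i k => M i k.succ - c k * M i k.castSucc
  rw [det_of_cons_zero_succ_sub_castSucc] at det_eq
  calc ∑ σ : Perm (Fin (m + 1)), ((Perm.sign σ : ℤ) : R) * ∏ a, M (σ a) a
      = M.det := (M.det_apply').symm
    _ = (-1) ^ m * ((-1) ^ m * M.det) := by rw [← mul_assoc, ← mul_pow]; simp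
    _ = _ := by
      rw [← det_eq, Matrix.det_apply']
      simp only [Fin.prod_univ_castSucc, Matrix.of_apply, Fin.snoc_castSucc, Fin.snoc_last]

end CommRing

theorem prod_filter_val_lt_eq_prod_castSucc {M : Type*} [CommMonoid M] {m : ℕ}
    (f : Fin (m + 1) → M) :
    ∏ a : Fin (m + 1) with a.val < m, f a = ∏ k : Fin m, f k.castSucc := by
  simp [Finset.prod_filter, Fin.prod_univ_castSucc]

section Field

variable {K : Type*} [Field K]

theorem zpow_sub_sub_mul_zpow {x : K} (hx : x ≠ 0) (c : K) (d e : ℤ) :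
    x ^ (e - d) - c * x ^ e = (1 - x ^ d * c) * x ^ (e - d) := by
  have zpow_eq : x ^ e = x ^ (e - d) * x ^ d := by rw [← zpow_add₀ hx, sub_add_cancel]
  rw [zpow_eq]
  ring

theorem asym_lemma_general {n : ℕ} (hn : 0 < n) (d s : ℤ) (c : K) (A : Fin n → K)
    (hA : ∀ a, A a ≠ 0) :
    ∑ σ : Perm (Fin n), ((Perm.sign σ : ℤ) : K) * ∏ a, A (σ a) ^ (-d * (s + (a : ℕ))) =
      (-1) ^ (n - 1) * ∑ σ : Perm (Fin n), ((Perm.sign σ : ℤ) : K) *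
        ((∏ a : Fin n with a.val < n - 1, (1 - A (σ a) ^ d * c)) *
          A (σ ⟨n - 1, Nat.sub_one_lt_of_lt hn⟩) ^ (-d * s) *
          ∏ a : Fin n with a.val < n - 1, A (σ a) ^ (-d * (s + (a : ℕ)) - d)) := by
  obtain ⟨m, rfl⟩ := Nat.exists_eq_add_one.mpr hn
  let V : Matrix (Fin (m + 1)) (Fin (m + 1)) K :=
    Matrix.of fun i j => A i ^ (-d * (s + (j : ℕ)))
  have V_zero (i) : V i 0 = A i ^ (-d * s) := by simp [V]
  have V_succ_sub (i) (k : Fin m) : V i k.succ - c * V i k.castSucc =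
      (1 - A i ^ d * c) * A i ^ (-d * (s + (k : ℕ)) - d) := by
    have exponent_succ : -d * (s + (k.succ : ℕ)) = -d * (s + (k : ℕ)) - d := by
      push_cast [Fin.val_succ]
      ring
    simp only [V, Matrix.of_apply, exponent_succ, Fin.val_castSucc]
    exact zpow_sub_sub_mul_zpow (hA i) c d _
  calc ∑ σ : Perm (Fin (m + 1)), ((Perm.sign σ : ℤ) : K) * ∏ a, V (σ a) a
      = (-1) ^ m * ∑ σ : Perm (Fin (m + 1)), ((Perm.sign σ : ℤ) : K) *
          ((∏ k : Fin m, (V (σ k.castSucc) k.succ - c * V (σ k.castSucc) k.castSucc)) *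
            V (σ (Fin.last m)) 0) :=
        sum_sign_mul_prod_eq_neg_one_pow_mul_sum_succ_sub_castSucc V fun _ => c
    _ = _ := by
      refine congrArg _ (sum_congr rfl fun σ _ => congrArg _ ?_)
      simp only [V_zero, V_succ_sub, prod_mul_distrib, Nat.add_sub_cancel,
        prod_filter_val_lt_eq_prod_castSucc, Fin.val_castSucc]
      exact mul_right_comm _ _ _

end Field

/-- Antisymmetrization lemma: for `0 ≤ r < ℓ`, nonzero `B` and nonzero
`A_{r+1},…,A_ℓ` (indexed here by `a : Fin (ℓ−r)`, with actual index `r+1+a`),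
`Asym ∏_{a=r+1}^{ℓ} A_a^{−2a}
  = (−1)^{ℓ−r−1}·Asym (∏_{a=r+1}^{ℓ−1}(1 − A_a²·B⁻²)·A_ℓ^{−2(r+1)}
      ·∏_{a=r+1}^{ℓ−1} A_a^{−2a−2})`. -/
theorem asym_lemma (r ℓ : ℕ) (h : r < ℓ) (B : ℂ) (hB : B ≠ 0)
    (A : Fin (ℓ - r) → ℂ) (hA : ∀ a, A a ≠ 0) :
    ∑ σ : Equiv.Perm (Fin (ℓ - r)), ((Equiv.Perm.sign σ : ℤ) : ℂ) *
        ∏ a, (A (σ a)) ^ (-(2 : ℤ) * ((r : ℤ) + 1 + (a : ℕ))) =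
      (-1 : ℂ) ^ (ℓ - r - 1) *
        ∑ σ : Equiv.Perm (Fin (ℓ - r)), ((Equiv.Perm.sign σ : ℤ) : ℂ) *
          ((∏ a ∈ Finset.univ.filter (fun a : Fin (ℓ - r) => (a : ℕ) < ℓ - r - 1),
              (1 - (A (σ a)) ^ 2 * (B ^ 2)⁻¹)) *
            (A (σ ⟨ℓ - r - 1, by omega⟩)) ^ (-(2 : ℤ) * ((r : ℤ) + 1)) *
            ∏ a ∈ Finset.univ.filter (fun a : Fin (ℓ - r) => (a : ℕ) < ℓ - r - 1),
              (A (σ a)) ^ (-(2 : ℤ) * ((r : ℤ) + 1 + (a : ℕ)) - 2)) := by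
  simpa only [zpow_ofNat] using
    asym_lemma_general (Nat.sub_pos_of_lt h) 2 (r + 1) (B ^ 2)⁻¹ A hA
end

section
/- Determinant factorization for the cycle determinant D: let m ≥ 0 and n ≥ m+2 be even integers, r ∈ ℕ, g : ℂ → ℂ a function with g(−z) = g(z) for all z, A₁,…,A_r ∈ ℂ, and B₁,…,B_{n−2}, B nonzero complex numbers such that B₁,…,B_{n−2}, B, −B are pairwise distinct. Then D_n(A₁,…,A_r | B₁,…,B_{n−2}, B, −B) = (−1)^{(n+m)/2} · g(B) · ∏_{a=1}^{r}(1 − A_a²·B⁻²) · D_{n−2}(A₁,…,A_r | B₁,…,B_{n−2}). -/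
open Finset

/-- The `N×N` matrix `M` whose determinant (divided by the Vandermonde-type
product) defines `D_N(A₁,…,A_r | B₁,…,B_N)`: its first `(N+m)/2` rows are
`(B_j^{2i})_j`, `i = 0,…,(N+m−2)/2`, and its remaining `(N−m)/2` rows are
`(g(B_j)·B_j^{2p−1}·∏_{a=1}^{r}(1 − A_a²·B_j⁻²))_j`, `p = 1,…,(N−m)/2`. -/
noncomputable def Dmat (m N : ℕ) (g : ℂ → ℂ) (r : ℕ) (A : Fin r → ℂ)
    (B : Fin N → ℂ) : Matrix (Fin N) (Fin N) ℂ :=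
  fun i j =>
    if (i : ℕ) < (N + m) / 2 then B j ^ (2 * (i : ℕ))
    else g (B j) * B j ^ (2 * ((i : ℕ) - (N + m) / 2) + 1) *
      ∏ a, (1 - (A a) ^ 2 * (B j ^ 2)⁻¹)

/-- `D_N(A₁,…,A_r | B₁,…,B_N) := det M / ∏_{j<j'}(B_j − B_{j'})`. -/
noncomputable def Dval (m N : ℕ) (g : ℂ → ℂ) (r : ℕ) (A : Fin r → ℂ)
    (B : Fin N → ℂ) : ℂ :=
  (Dmat m N g r A B).det /
    ∏ p ∈ Finset.univ.filter (fun p : Fin N × Fin N => p.1 < p.2), (B p.1 - B p.2)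

/-- The vector `(B₁, …, B_{n−2}, B, −B)` of length `n`. -/
def extB (n : ℕ) (B : Fin (n - 2) → ℂ) (b : ℂ) : Fin n → ℂ :=
  fun j => if h : (j : ℕ) < n - 2 then B ⟨j, h⟩ else if (j : ℕ) = n - 2 then b else -b

/-!
The matrix `M` depends only on the squares `y_j = B_j²` and the weights
`c_j = g(B_j) B_j ∏ (1 - A_a² B_j⁻²)`: it is a block of rows `y_j ^ i` followed by a block of rows
`c_j y_j ^ i`. The nodes `B` and `-B` have the same square `t` and opposite weights. Subtracting,
inside each block, `t` times every row from the next one leaves the leading rows `1` and `c_j` of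
the two blocks, and turns all other rows into rows of the smaller matrix with column `j` scaled by
`y_j - t`. The last two columns now vanish outside the leading rows, so a Laplace expansion along
them factors the determinant, and the factors `y_j - t = (B_j - B)(B_j + B)` cancel against the
product of differences.
-/

section Laplace

variable {R : Type*} [CommRing R] {N : ℕ}

lemma det_insertNth_of_last_col_eq_zero (k : Fin (N + 1)) (v : Fin (N + 1) → R)
    {W : Fin N → Fin (N + 1) → R} (hW : ∀ i, W i (Fin.last N) = 0) :
    (Matrix.of (k.insertNth v W)).det =
      (-1) ^ (k + N : ℕ) * v (Fin.last N) * (Matrix.of fun i => Fin.init (W i)).det := by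
  have minor : (Matrix.of (k.insertNth v W)).submatrix k.succAbove (Fin.last N).succAbove =
      Matrix.of fun i => Fin.init (W i) := by
    ext i j
    simp [Fin.init]
  rw [Matrix.det_succ_column _ (Fin.last N), Fin.sum_univ_succAbove _ k, minor]
  simp [hW]

lemma det_cons_insertNth_of_last_two_cols_eq_zero (k : Fin (N + 1)) (u v : Fin (N + 2) → R)
    {W : Fin N → Fin (N + 2) → R} (hlast : ∀ i, W i (Fin.last (N + 1)) = 0)
    (hprev : ∀ i, W i (Fin.last N).castSucc = 0) :
    (Matrix.of (Fin.cons u (k.insertNth v W))).det =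
      (-1) ^ (k : ℕ) * (u (Fin.last N).castSucc * v (Fin.last (N + 1)) -
        u (Fin.last (N + 1)) * v (Fin.last N).castSucc) *
      (Matrix.of fun i => Fin.init (Fin.init (W i))).det := by
  set M : Matrix (Fin (N + 2)) (Fin (N + 2)) R := Matrix.of (Fin.cons u (k.insertNth v W)) with hM
  have minor_zero : M.submatrix (Fin.succAbove 0) (Fin.last (N + 1)).succAbove =
      Matrix.of (k.insertNth (Fin.init v) fun i => Fin.init (W i)) := by
    ext i j
    cases i using Fin.succAboveCases k <;> simp [hM, Fin.init]
  have minor_succ : M.submatrix k.succ.succAbove (Fin.last (N + 1)).succAbove =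
      Matrix.of (Fin.insertNth 0 (Fin.init u) fun i => Fin.init (W i)) := by
    ext i j
    cases i using Fin.cases <;> simp [hM, Fin.init]
  rw [Matrix.det_succ_column _ (Fin.last (N + 1)), Fin.sum_univ_succ,
    Fin.sum_univ_succAbove _ k, ← Fin.succAbove_zero, minor_zero, Fin.succAbove_zero, minor_succ,
    det_insertNth_of_last_col_eq_zero _ _ hprev, det_insertNth_of_last_col_eq_zero _ _ hprev]
  have sign_sq : (-1 : R) ^ N * (-1) ^ N = 1 := by rw [← mul_pow, neg_one_mul, neg_neg, one_pow]
  simp only [hM, hlast, Fin.init, Matrix.of_apply, Fin.cons_zero, Fin.cons_succ,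
    Fin.insertNth_apply_same, Fin.insertNth_apply_succAbove, Fin.val_zero, Fin.val_succ,
    Fin.val_last, mul_zero, zero_mul, Finset.sum_const_zero, add_zero, zero_add]
  linear_combination (-1) ^ (k : ℕ) * (u (Fin.last N).castSucc * v (Fin.last (N + 1)) -
    u (Fin.last (N + 1)) * v (Fin.last N).castSucc) *
    (Matrix.of fun i => Fin.init (Fin.init (W i))).det * sign_sq

end Laplace

section TwoBlockVandermonde

variable {R ι : Type*} [CommRing R] {N : ℕ}

/-- The `M`-rowed matrix whose first `K` rows are `y ^ i`, `i = 0, 1, …`, and whose remaining rows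
are `c * y ^ i`, `i = 0, 1, …`: two stacked Vandermonde matrices in the nodes `y`, the second one
with columns weighted by `c`. -/
def twoBlockVandermonde (K M : ℕ) (y c : ι → R) : Matrix (Fin M) ι R :=
  .of fun i j => if (i : ℕ) < K then y j ^ (i : ℕ) else c j * y j ^ (i - K : ℕ)

lemma twoBlockVandermonde_zero (K M : ℕ) (y c : ι → R) (j : ι) :
    twoBlockVandermonde (K + 1) (M + 1) y c 0 j = 1 := by
  simp [twoBlockVandermonde]

lemma twoBlockVandermonde_succ_self (k : Fin N) (y c : ι → R) (j : ι) :
    twoBlockVandermonde (k + 1) (N + 1) y c k.succ j = c j := by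
  simp [twoBlockVandermonde]

lemma twoBlockVandermonde_succ_succAbove (k : Fin (N + 1)) (y c : ι → R) (t : R) (i : Fin N)
    (j : ι) :
    twoBlockVandermonde (k + 1) (N + 2) y c (k.succAbove i).succ j =
      (y j - t) * twoBlockVandermonde k N y c i j +
        t * twoBlockVandermonde (k + 1) (N + 2) y c (k.succAbove i).castSucc j := by
  rcases lt_or_ge i.castSucc k with hik | hki
  · have hik' : (i : ℕ) < k := hik
    simp only [twoBlockVandermonde, Fin.succAbove_of_castSucc_lt k i hik, Matrix.of_apply,
      Fin.val_succ, Fin.val_castSucc, Nat.add_lt_add_iff_right, hik',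
      hik'.trans (Nat.lt_succ_self _), if_true]
    ring
  · obtain ⟨s, hs⟩ : ∃ s, (i : ℕ) = k + s := Nat.exists_eq_add_of_le hki
    have not_lt : ¬ (k + s + 1 < (k : ℕ)) := by omega
    have shift : (k + s + 1 - k : ℕ) = s + 1 := by omega
    simp only [twoBlockVandermonde, Fin.succAbove_of_le_castSucc k i hki, Matrix.of_apply,
      Fin.val_succ, Fin.val_castSucc, hs, add_lt_add_iff_right, not_lt, add_lt_iff_neg_left,
      not_lt_zero, Nat.add_sub_add_right, add_tsub_cancel_left, shift, if_false]
    ring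

theorem det_twoBlockVandermonde_of_last_two_nodes_eq {K : ℕ} (hK : K ≤ N) {y : Fin (N + 2) → R}
    (c : Fin (N + 2) → R) (hy : y (Fin.last (N + 1)) = y (Fin.last N).castSucc) :
    (twoBlockVandermonde (K + 1) (N + 2) y c).det =
      (-1) ^ K * (c (Fin.last (N + 1)) - c (Fin.last N).castSucc) *
      ((∏ j : Fin N, (y j.castSucc.castSucc - y (Fin.last N).castSucc)) *
        (twoBlockVandermonde K N (Fin.init (Fin.init y)) (Fin.init (Fin.init c))).det) := by
  obtain ⟨k, rfl⟩ : ∃ k : Fin (N + 1), (k : ℕ) = K := ⟨⟨K, Nat.lt_succ_of_le hK⟩, rfl⟩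
  set t := y (Fin.last N).castSucc
  let W : Fin N → Fin (N + 2) → R := fun i j => (y j - t) * twoBlockVandermonde k N y c i j
  have row_reduction : (twoBlockVandermonde (k + 1) (N + 2) y c).det =
      (Matrix.of (Fin.cons 1 (k.insertNth c W))).det := by
    refine Matrix.det_eq_of_forall_row_eq_smul_add_pred (k.insertNth 0 fun _ => t)
      (twoBlockVandermonde_zero _ _ y c) (k.forall_iff_succAbove.2 ⟨fun j => ?_, fun i j => ?_⟩)
    · simp [twoBlockVandermonde_succ_self]
    · simp [W, twoBlockVandermonde_succ_succAbove k y c t i j]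
  rw [row_reduction, det_cons_insertNth_of_last_two_cols_eq_zero k _ _
    (fun i => by simp [W, hy, t]) (fun i => by simp [W, t]), ← Matrix.det_mul_row]
  simp only [Pi.one_apply, one_mul]
  rfl

end TwoBlockVandermonde

lemma prod_filter_lt_castSucc {M : Type*} [CommMonoid M] {N : ℕ}
    (f : Fin (N + 1) → Fin (N + 1) → M) :
    ∏ p : Fin (N + 1) × Fin (N + 1) with p.1 < p.2, f p.1 p.2 =
      (∏ p : Fin N × Fin N with p.1 < p.2, f p.1.castSucc p.2.castSucc) *
        ∏ j : Fin N, f j.castSucc (Fin.last N) := by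
  simp only [Finset.prod_filter, Fintype.prod_prod_type_right, Fin.prod_univ_castSucc,
    Fin.castSucc_lt_castSucc_iff, Fin.castSucc_lt_last, lt_irrefl, (Fin.castSucc_lt_last _).not_gt,
    if_true, if_false, mul_one]

lemma prod_sub_of_last_two_opposite {R : Type*} [CommRing R] {N : ℕ} {x : Fin (N + 2) → R}
    (hx : x (Fin.last (N + 1)) = -x (Fin.last N).castSucc) :
    ∏ p : Fin (N + 2) × Fin (N + 2) with p.1 < p.2, (x p.1 - x p.2) =
      (∏ p : Fin N × Fin N with p.1 < p.2,
          (Fin.init (Fin.init x) p.1 - Fin.init (Fin.init x) p.2)) *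
        ((∏ j : Fin N, (x j.castSucc.castSucc ^ 2 - x (Fin.last N).castSucc ^ 2)) *
          (2 * x (Fin.last N).castSucc)) := by
  have factor (j : Fin N) : x j.castSucc.castSucc ^ 2 - x (Fin.last N).castSucc ^ 2 =
      (x j.castSucc.castSucc - x (Fin.last N).castSucc) *
        (x j.castSucc.castSucc - x (Fin.last (N + 1))) := by
    rw [hx]; ring
  rw [prod_filter_lt_castSucc fun i j => x i - x j,
    prod_filter_lt_castSucc fun i j => x i.castSucc - x j.castSucc, Fin.prod_univ_castSucc,
    Finset.prod_congr rfl fun j _ => factor j, Finset.prod_mul_distrib, hx]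
  simp only [Fin.init]
  ring

section CycleDet

variable {F : Type*} [Field F] {N : ℕ}

/-- The cycle determinant over a field, with an arbitrary number `K` of even rows and with the
weights of the odd rows given as a vector `c` instead of a function of the nodes `x`. It takes the
junk value `0` when the nodes are not distinct. -/
def cycleDet (K : ℕ) (x c : Fin N → F) : F :=
  (twoBlockVandermonde K N (fun j => x j ^ 2) c).det /
    ∏ p : Fin N × Fin N with p.1 < p.2, (x p.1 - x p.2)

lemma two_mul_ne_zero_of_last_two_opposite {x : Fin (N + 2) → F} (hinj : Function.Injective x)
    (hx : x (Fin.last (N + 1)) = -x (Fin.last N).castSucc) :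
    2 * x (Fin.last N).castSucc ≠ 0 := by
  have last_ne := hinj.ne (Fin.castSucc_lt_last (Fin.last N)).ne
  rw [hx] at last_ne
  rwa [two_mul, ← sub_neg_eq_add, sub_ne_zero]

lemma sq_sub_sq_ne_zero_of_last_two_opposite {x : Fin (N + 2) → F} (hinj : Function.Injective x)
    (hx : x (Fin.last (N + 1)) = -x (Fin.last N).castSucc) (j : Fin N) :
    x j.castSucc.castSucc ^ 2 - x (Fin.last N).castSucc ^ 2 ≠ 0 := by
  rw [sub_ne_zero, Ne, sq_eq_sq_iff_eq_or_eq_neg, ← hx, hinj.eq_iff, hinj.eq_iff]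
  simp [Fin.ext_iff, j.isLt.ne, (j.isLt.trans (Nat.lt_succ_self N)).ne]

theorem cycleDet_of_last_two_opposite {K : ℕ} (hK : K ≤ N) {x c : Fin (N + 2) → F}
    (hinj : Function.Injective x)
    (hx : x (Fin.last (N + 1)) = -x (Fin.last N).castSucc)
    (hc : c (Fin.last (N + 1)) = -c (Fin.last N).castSucc) :
    cycleDet (K + 1) x c =
      (-1) ^ (K + 1) * (c (Fin.last N).castSucc / x (Fin.last N).castSucc) *
        cycleDet K (Fin.init (Fin.init x)) (Fin.init (Fin.init c)) := by
  have hprod : ∏ j : Fin N, (x j.castSucc.castSucc ^ 2 - x (Fin.last N).castSucc ^ 2) ≠ 0 :=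
    Finset.prod_ne_zero_iff.2 fun j _ => sq_sub_sq_ne_zero_of_last_two_opposite hinj hx j
  obtain ⟨two_ne_zero, node_ne_zero⟩ :=
    mul_ne_zero_iff.1 (two_mul_ne_zero_of_last_two_opposite hinj hx)
  have nodes_eq : x (Fin.last (N + 1)) ^ 2 = x (Fin.last N).castSucc ^ 2 := by rw [hx, neg_sq]
  rw [cycleDet, cycleDet, prod_sub_of_last_two_opposite hx,
    det_twoBlockVandermonde_of_last_two_nodes_eq hK c nodes_eq, hc]
  change _ = _ * ((twoBlockVandermonde K N (Fin.init (Fin.init fun j => x j ^ 2)) _).det / _)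
  field_simp
  ring

/-- The weight `g(z) z ∏ (1 - A_a² z⁻²)` of the node `z` in the odd rows; one factor `z` is split
off the powers `z^{2p-1}` so that only powers of `z²` remain. -/
def cycleWeight (g : F → F) {r : ℕ} (A : Fin r → F) (z : F) : F :=
  g z * z * ∏ a, (1 - A a ^ 2 * (z ^ 2)⁻¹)

lemma cycleWeight_neg {g : F → F} {r : ℕ} (A : Fin r → F) {z : F} (hg : g (-z) = g z) :
    cycleWeight g A (-z) = -cycleWeight g A z := by
  simp only [cycleWeight, hg, neg_sq]
  ring

lemma cycleWeight_div_self (g : F → F) {r : ℕ} (A : Fin r → F) {z : F} (hz : z ≠ 0) :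
    cycleWeight g A z / z = g z * ∏ a, (1 - A a ^ 2 * (z ^ 2)⁻¹) := by
  rw [cycleWeight, mul_right_comm, mul_div_cancel_right₀ _ hz]

end CycleDet

lemma Dval_eq_cycleDet (m N : ℕ) (g : ℂ → ℂ) (r : ℕ) (A : Fin r → ℂ) (B : Fin N → ℂ) :
    Dval m N g r A B = cycleDet ((N + m) / 2) B fun j => cycleWeight g A (B j) := by
  rw [Dval, cycleDet]
  congr 2
  ext i j
  simp only [Dmat, twoBlockVandermonde, cycleWeight, Matrix.of_apply, pow_mul]
  split_ifs <;> ring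

section extB

variable {N : ℕ} (B : Fin N → ℂ) (b : ℂ)

lemma init_init_extB : Fin.init (Fin.init (extB (N + 2) B b)) = B := by
  ext j
  simp [extB, Fin.init]

lemma extB_castSucc_last : extB (N + 2) B b (Fin.last N).castSucc = b := by
  simp [extB]

lemma extB_last : extB (N + 2) B b (Fin.last (N + 1)) = -b := by
  simp [extB]

end extB

theorem Dval_factorization_general (m n : ℕ) (hmn : m + 2 ≤ n) (r : ℕ) (g : ℂ → ℂ)
    (A : Fin r → ℂ) (B : Fin (n - 2) → ℂ) (Bn : ℂ) (hg : g (-Bn) = g Bn)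
    (hdist : Function.Injective (extB n B Bn)) :
    Dval m n g r A (extB n B Bn) =
      (-1 : ℂ) ^ ((n + m) / 2) * g Bn * (∏ a, (1 - (A a) ^ 2 * (Bn ^ 2)⁻¹)) *
        Dval m (n - 2) g r A B := by
  obtain ⟨N, rfl⟩ : ∃ N, n = N + 2 := ⟨n - 2, by omega⟩
  change Fin N → ℂ at B
  have node_prev : extB (N + 2) B Bn (Fin.last N).castSucc = Bn := extB_castSucc_last B Bn
  have node_last : extB (N + 2) B Bn (Fin.last (N + 1)) =
      -extB (N + 2) B Bn (Fin.last N).castSucc := by rw [node_prev, extB_last]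
  have weight_last : cycleWeight g A (extB (N + 2) B Bn (Fin.last (N + 1))) =
      -cycleWeight g A (extB (N + 2) B Bn (Fin.last N).castSucc) := by
    rw [node_last, node_prev, cycleWeight_neg A hg]
  have hBn : Bn ≠ 0 := by
    simpa [node_prev] using two_mul_ne_zero_of_last_two_opposite hdist node_last
  have hrows : (N + 2 + m) / 2 = (N + m) / 2 + 1 := by omega
  have weights_init : Fin.init (Fin.init fun j => cycleWeight g A (extB (N + 2) B Bn j)) =
      fun j => cycleWeight g A (B j) := by
    conv_rhs => rw [← init_init_extB B Bn]
    rfl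
  rw [Dval_eq_cycleDet, hrows, cycleDet_of_last_two_opposite (by omega) hdist node_last weight_last,
    node_prev, cycleWeight_div_self g A hBn, init_init_extB, weights_init, ← Dval_eq_cycleDet,
    ← mul_assoc]
  rfl

/-- Determinant factorization for the cycle determinant `D`: for even
`m ≥ 0`, even `n ≥ m+2`, `g` even, and `B₁,…,B_{n−2},B,−B` pairwise distinct
and nonzero,
`D_n(A | B₁,…,B_{n−2}, B, −B)
  = (−1)^{(n+m)/2}·g(B)·∏_{a=1}^{r}(1 − A_a²·B⁻²)·D_{n−2}(A | B₁,…,B_{n−2})`. -/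
theorem Dval_factorization (m n : ℕ) (hm : Even m) (hn : Even n) (hmn : m + 2 ≤ n)
    (r : ℕ) (g : ℂ → ℂ) (hg : ∀ z, g (-z) = g z) (A : Fin r → ℂ)
    (B : Fin (n - 2) → ℂ) (Bn : ℂ) (hB : ∀ j, B j ≠ 0) (hBn : Bn ≠ 0)
    (hdist : Function.Injective (extB n B Bn)) :
    Dval m n g r A (extB n B Bn) =
      (-1 : ℂ) ^ ((n + m) / 2) * g Bn * (∏ a, (1 - (A a) ^ 2 * (Bn ^ 2)⁻¹)) *
        Dval m (n - 2) g r A B := by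
  exact Dval_factorization_general m n hmn r g A B Bn (hg Bn) hdist
end

section
/- New symmetry of cycles (Proposition of Section 6): fix even integers m ≥ 0 and n ≥ m+2, r ∈ ℕ with m − 2r ≥ 0, ℓ := r + (n−m)/2, a parameter t ∈ ℂ and a constant d ∈ ℂ. Suppose functions P_n (of (A₁,…,A_ℓ; B₁,…,Bₙ)), P_{n−2} (of (A₁,…,A_{ℓ−1}; B₁,…,B_{n−2})), P̃_n and P̄_n (of (A₁,…,A_ℓ; B₁,…,B_{n−2}; B)) satisfy, for all values of the variables in a set where all denominators below are nonzero: (i) P_n(A₁,…,A_ℓ | B₁,…,B_{n−2}, B, −B) = ∏_{a=1}^{r}(1 − A_a²·B⁻²)·P̃_n; (ii) Asym(P̃_n) = Asym(∏_{a=r+1}^{ℓ−1}(1 − A_a²·B⁻²)·P̄_n), where Asym is antisymmetrization over the variables A_{r+1},…,A_ℓ; (iii) P̄_n(A₁,…,A_{ℓ−1}, ε·B | B₁,…,B_{n−2} | B) = ε·B^{n−1}·d·P_{n−2}(A₁,…,A_{ℓ−1} | B₁,…,B_{n−2}) for ε = ±1. Then, with P_n^{new} := P_n·Q_n and P_{n−2}^{new}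 := P_{n−2}·Q_{n−2}, there exist functions P̃_n^{new} and P̄_n^{new} such that conditions (i), (ii), (iii) hold for P_n^{new}, P_{n−2}^{new}, P̃_n^{new}, P̄_n^{new} with the same constant d. -/
open Finset Equiv

/-- The symmetry factor
`Q_N(A₁,…,A_{r+q} | B₁,…,B_N) := ∏_{b=1}^{q}(1 − A_{r+b}²·t²) / ∏_{j=1}^{N}(1 − B_j·t)`,
where `q` is instantiated to `(N−m)/2` and `t` plays the role of `e^y`. -/
noncomputable def Qfac (t : ℂ) (r q N : ℕ) (A : Fin (r + q) → ℂ)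
    (B : Fin N → ℂ) : ℂ :=
  (∏ b : Fin q, (1 - (A (Fin.natAdd r b)) ^ 2 * t ^ 2)) / ∏ j, (1 - B j * t)

/-- Antisymmetrization over the tail variables `A_{r+1},…,A_{r+q}`:
`Asym f (A) := ∑_{σ ∈ Perm(Fin q)} sgn(σ)·f(A₁,…,A_r, A_{r+σ(1)},…,A_{r+σ(q)})`. -/
noncomputable def Asym (r q : ℕ) (f : (Fin (r + q) → ℂ) → ℂ)
    (A : Fin (r + q) → ℂ) : ℂ :=
  ∑ σ : Equiv.Perm (Fin q), ((Equiv.Perm.sign σ : ℤ) : ℂ) *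
    f (fun i => Fin.addCases (motive := fun _ => ℂ)
        (fun a => A (Fin.castAdd q a)) (fun c => A (Fin.natAdd r (σ c))) i)

/-!
The factor `Q_n` is symmetric in `A_{r+1}, …, A_ℓ`, so it passes through `Asym`. Moreover the pair
`B, -B` contributes `(1 - B t)(1 + B t) = 1 - B² t²` to its denominator, which is exactly the factor
that `A_ℓ = ±B` contributes to its numerator. Hence `Q_n` reduces to `Q_{n-2}` there, and
multiplying both `P̃_n` and `P̄_n` by `Q_n` preserves the three conditions.
-/

/-- The action of a permutation `σ` of the tail indices `r, …, r + q - 1` on a tuple; `Asym` is the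
signed sum over these actions. -/
def permTail {α : Type*} {r q : ℕ} (σ : Perm (Fin q)) (A : Fin (r + q) → α) : Fin (r + q) → α :=
  fun i => Fin.addCases (motive := fun _ => α)
    (fun a => A (Fin.castAdd q a)) (fun c => A (Fin.natAdd r (σ c))) i

theorem permTail_natAdd {α : Type*} {r q : ℕ} (σ : Perm (Fin q)) (A : Fin (r + q) → α)
    (c : Fin q) : permTail σ A (Fin.natAdd r c) = A (Fin.natAdd r (σ c)) :=
  Fin.addCases_right c

theorem Asym_mul_of_forall_permTail_eq {r q : ℕ} (f : (Fin (r + q) → ℂ) → ℂ)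
    {g : (Fin (r + q) → ℂ) → ℂ} {A : Fin (r + q) → ℂ} (hg : ∀ σ, g (permTail σ A) = g A) :
    Asym r q (fun A' => f A' * g A') A = Asym r q f A * g A := by
  change ∑ σ : Perm (Fin q), ((Perm.sign σ : ℤ) : ℂ) * (f (permTail σ A) * g (permTail σ A)) =
    (∑ σ : Perm (Fin q), ((Perm.sign σ : ℤ) : ℂ) * f (permTail σ A)) * g A
  simp only [hg, sum_mul, mul_assoc]

theorem Qfac_permTail {r q N : ℕ} (t : ℂ) (σ : Perm (Fin q)) (A : Fin (r + q) → ℂ)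
    (B : Fin N → ℂ) : Qfac t r q N (permTail σ A) B = Qfac t r q N A B := by
  simp only [Qfac, permTail_natAdd]
  rw [Equiv.prod_comp σ fun c => 1 - A (Fin.natAdd r c) ^ 2 * t ^ 2]

theorem Asym_mul_Qfac (r q : ℕ) {N : ℕ} (t : ℂ) (f : (Fin (r + q) → ℂ) → ℂ)
    (A : Fin (r + q) → ℂ) (B : Fin N → ℂ) :
    Asym r q (fun A' => f A' * Qfac t r q N A' B) A = Asym r q f A * Qfac t r q N A B :=
  Asym_mul_of_forall_permTail_eq f fun σ => Qfac_permTail t σ A B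

theorem prod_natAdd_snoc {α M : Type*} [CommMonoid M] {r q : ℕ} (f : α → M) (A : Fin (r + q) → α)
    (a : α) :
    ∏ c : Fin (q + 1), f ((Fin.snoc A a : Fin (r + q + 1) → α) (Fin.natAdd r c)) =
      (∏ c : Fin q, f (A (Fin.natAdd r c))) * f a := by
  have snoc_init (c : Fin q) :
      (Fin.snoc A a : Fin (r + q + 1) → α) (Fin.natAdd r c.castSucc) = A (Fin.natAdd r c) :=
    Fin.snoc_castSucc (α := fun _ => α) a A (Fin.natAdd r c)
  have snoc_end : (Fin.snoc A a : Fin (r + q + 1) → α) (Fin.natAdd r (Fin.last q)) = a :=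
    Fin.snoc_last (α := fun _ => α) a A
  simp only [Fin.prod_univ_castSucc, snoc_init, snoc_end]

theorem Qfac_snoc_of_sq_eq_sq {r q N : ℕ} {t a b : ℂ} (hab : a ^ 2 = b ^ 2)
    (hsub : 1 - b * t ≠ 0) (hadd : 1 + b * t ≠ 0) (A : Fin (r + q) → ℂ) (B : Fin N → ℂ) :
    Qfac t r (q + 1) (N + 2) (Fin.snoc A a : Fin (r + q + 1) → ℂ)
      (Fin.snoc (Fin.snoc B b) (-b)) = Qfac t r q N A B := by
  have pair_factor : (1 - b * t) * (1 - -b * t) = 1 - a ^ 2 * t ^ 2 := by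
    rw [hab]
    ring
  have factor_ne_zero : 1 - a ^ 2 * t ^ 2 ≠ 0 := by
    rw [← pair_factor, neg_mul, sub_neg_eq_add]
    exact mul_ne_zero hsub hadd
  simp only [Qfac, prod_natAdd_snoc fun x : ℂ => 1 - x ^ 2 * t ^ 2, Fin.prod_univ_castSucc (n := N),
    Fin.prod_univ_castSucc (n := N + 1), Fin.snoc_castSucc, Fin.snoc_last]
  rw [mul_assoc, pair_factor, mul_div_mul_right _ _ factor_ne_zero]

/-- Conditions (i), (ii), (iii) on `P_n`, `P_{n-2}`, `P̃_n`, `P̄_n` (here `Pn`, `Pn2`, `Pt`, `Pb`)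
with constant `d`, at fixed values of `B = (B₁, …, B_{n-2})` and of the extra variable `b`, where
`N = n - 2` and `ℓ = r + q + 1`. The field `ne_zero` rules out the junk value `(b ^ 2)⁻¹ = 0`. -/
structure ResidueConditions {r q N : ℕ} (d : ℂ)
    (Pn : (Fin (r + q + 1) → ℂ) → (Fin (N + 2) → ℂ) → ℂ)
    (Pn2 : (Fin (r + q) → ℂ) → (Fin N → ℂ) → ℂ)
    (Pt Pb : (Fin (r + q + 1) → ℂ) → (Fin N → ℂ) → ℂ → ℂ) (B : Fin N → ℂ) (b : ℂ) : Prop where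
  ne_zero : b ≠ 0
  factor (A : Fin (r + q + 1) → ℂ) :
    Pn A (Fin.snoc (Fin.snoc B b) (-b)) =
      (∏ a : Fin r, (1 - (A (Fin.castAdd (q + 1) a)) ^ 2 * (b ^ 2)⁻¹)) * Pt A B b
  asym (A : Fin (r + q + 1) → ℂ) :
    Asym r (q + 1) (fun A' => Pt A' B b) A =
      Asym r (q + 1) (fun A' =>
        (∏ c ∈ Finset.univ.filter (fun c : Fin (q + 1) => (c : ℕ) < q),
          (1 - (A' (Fin.natAdd r c)) ^ 2 * (b ^ 2)⁻¹)) * Pb A' B b) A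
  recursion (A : Fin (r + q) → ℂ) (ε : ℂ) (hε : ε = 1 ∨ ε = -1) :
    Pb (Fin.snoc A (ε * b)) B b = ε * b ^ (N + 1) * d * Pn2 A B

theorem new_symmetry_general {r q N : ℕ} {t d : ℂ}
    {Pn : (Fin (r + q + 1) → ℂ) → (Fin (N + 2) → ℂ) → ℂ}
    {Pn2 : (Fin (r + q) → ℂ) → (Fin N → ℂ) → ℂ}
    {Pt Pb : (Fin (r + q + 1) → ℂ) → (Fin N → ℂ) → ℂ → ℂ} {B : Fin N → ℂ} {b : ℂ}
    (hP : ResidueConditions d Pn Pn2 Pt Pb B b)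
    (hQ : ∀ j, 1 - (Fin.snoc (Fin.snoc B b) (-b) : Fin (N + 2) → ℂ) j * t ≠ 0) :
    ResidueConditions d
      (fun A C => Pn A C * Qfac t r (q + 1) (N + 2) A C)
      (fun A B => Pn2 A B * Qfac t r q N A B)
      (fun A B b => Pt A B b * Qfac t r (q + 1) (N + 2) A (Fin.snoc (Fin.snoc B b) (-b)))
      (fun A B b => Pb A B b * Qfac t r (q + 1) (N + 2) A (Fin.snoc (Fin.snoc B b) (-b))) B b where
  ne_zero := hP.ne_zero
  factor A := by rw [hP.factor, mul_assoc]
  asym A := by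
    simp only [← mul_assoc]
    rw [Asym_mul_Qfac r (q + 1) t fun A' => Pt A' B b, hP.asym A, ← Asym_mul_Qfac r (q + 1)]
  recursion A ε hε := by
    have sq_eq_sq : (ε * b) ^ 2 = b ^ 2 := by
      rw [mul_pow, sq_eq_one_iff.mpr hε, one_mul]
    have hsub : 1 - b * t ≠ 0 := by
      simpa only [Fin.snoc_castSucc, Fin.snoc_last] using hQ (Fin.last N).castSucc
    have hadd : 1 + b * t ≠ 0 := by
      simpa only [Fin.snoc_last, neg_mul, sub_neg_eq_add] using hQ (Fin.last (N + 1))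
    rw [hP.recursion A ε hε, Qfac_snoc_of_sq_eq_sq sq_eq_sq hsub hadd, mul_assoc]

/-- New symmetry of cycles (Proposition of Section 6): if the family
`(P_n, P_{n−2}, P̃_n, P̄_n)` satisfies the residue conditions (i)–(iii)
(with `n = m + 2(q+1)`, `ℓ = r + q + 1`, constant `d`), then the multiplied
family `P_n·Q_n`, `P_{n−2}·Q_{n−2}` satisfies them as well, with the same
constant `d`, on the set where additionally the denominators of `Q` do not
vanish. -/
theorem new_symmetry (m : ℕ) (hm : Even m) (r q : ℕ) (hr : 2 * r ≤ m)
    (t d : ℂ)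
    (Pn : (Fin (r + q + 1) → ℂ) → (Fin (m + 2 * q + 2) → ℂ) → ℂ)
    (Pn2 : (Fin (r + q) → ℂ) → (Fin (m + 2 * q) → ℂ) → ℂ)
    (Pt Pb : (Fin (r + q + 1) → ℂ) → (Fin (m + 2 * q) → ℂ) → ℂ → ℂ)
    (h1 : ∀ (A : Fin (r + q + 1) → ℂ) (B : Fin (m + 2 * q) → ℂ) (b : ℂ),
      b ≠ 0 → (∀ j, B j ≠ 0) →
      Pn A (Fin.snoc (Fin.snoc B b) (-b)) =
        (∏ a : Fin r, (1 - (A (Fin.castAdd (q + 1) a)) ^ 2 * (b ^ 2)⁻¹)) * Pt A B b)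
    (h2 : ∀ (A : Fin (r + q + 1) → ℂ) (B : Fin (m + 2 * q) → ℂ) (b : ℂ),
      b ≠ 0 → (∀ j, B j ≠ 0) →
      Asym r (q + 1) (fun A' => Pt A' B b) A =
        Asym r (q + 1) (fun A' =>
          (∏ c ∈ Finset.univ.filter (fun c : Fin (q + 1) => (c : ℕ) < q),
            (1 - (A' (Fin.natAdd r c)) ^ 2 * (b ^ 2)⁻¹)) * Pb A' B b) A)
    (h3 : ∀ (A : Fin (r + q) → ℂ) (B : Fin (m + 2 * q) → ℂ) (b ε : ℂ),
      b ≠ 0 → (∀ j, B j ≠ 0) → (ε = 1 ∨ ε = -1) →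
      Pb (Fin.snoc A (ε * b)) B b = ε * b ^ (m + 2 * q + 1) * d * Pn2 A B) :
    ∃ Pt' Pb' : (Fin (r + q + 1) → ℂ) → (Fin (m + 2 * q) → ℂ) → ℂ → ℂ,
      (∀ (A : Fin (r + q + 1) → ℂ) (B : Fin (m + 2 * q) → ℂ) (b : ℂ),
        b ≠ 0 → (∀ j, B j ≠ 0) → (∀ j, 1 - B j * t ≠ 0) →
        1 - b * t ≠ 0 → 1 + b * t ≠ 0 →
        Pn A (Fin.snoc (Fin.snoc B b) (-b)) *
            Qfac t r (q + 1) (m + 2 * q + 2) A (Fin.snoc (Fin.snoc B b) (-b)) =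
          (∏ a : Fin r, (1 - (A (Fin.castAdd (q + 1) a)) ^ 2 * (b ^ 2)⁻¹)) *
            Pt' A B b) ∧
      (∀ (A : Fin (r + q + 1) → ℂ) (B : Fin (m + 2 * q) → ℂ) (b : ℂ),
        b ≠ 0 → (∀ j, B j ≠ 0) → (∀ j, 1 - B j * t ≠ 0) →
        1 - b * t ≠ 0 → 1 + b * t ≠ 0 →
        Asym r (q + 1) (fun A' => Pt' A' B b) A =
          Asym r (q + 1) (fun A' =>
            (∏ c ∈ Finset.univ.filter (fun c : Fin (q + 1) => (c : ℕ) < q),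
              (1 - (A' (Fin.natAdd r c)) ^ 2 * (b ^ 2)⁻¹)) * Pb' A' B b) A) ∧
      (∀ (A : Fin (r + q) → ℂ) (B : Fin (m + 2 * q) → ℂ) (b ε : ℂ),
        b ≠ 0 → (∀ j, B j ≠ 0) → (∀ j, 1 - B j * t ≠ 0) →
        1 - b * t ≠ 0 → 1 + b * t ≠ 0 → (ε = 1 ∨ ε = -1) →
        Pb' (Fin.snoc A (ε * b)) B b =
          ε * b ^ (m + 2 * q + 1) * d *
            (Pn2 A B * Qfac t r q (m + 2 * q) A B)) := by
  have conditions (B : Fin (m + 2 * q) → ℂ) (b : ℂ) (hb : b ≠ 0) (hB : ∀ j, B j ≠ 0)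
      (hBt : ∀ j, 1 - B j * t ≠ 0) (hsub : 1 - b * t ≠ 0) (hadd : 1 + b * t ≠ 0) :=
    new_symmetry_general (t := t) (Pn := Pn) (Pn2 := Pn2) (Pt := Pt) (Pb := Pb)
      ⟨hb, fun A => h1 A B b hb hB, fun A => h2 A B b hb hB, fun A ε => h3 A B b ε hb hB⟩
      (by simp [Fin.forall_fin_succ', hBt, hsub, hadd])
  exact ⟨_, _,
    fun A B b hb hB hBt hsub hadd => (conditions B b hb hB hBt hsub hadd).factor A,
    fun A B b hb hB hBt hsub hadd => (conditions B b hb hB hBt hsub hadd).asym A,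
    fun A B b ε hb hB hBt hsub hadd => (conditions B b hb hB hBt hsub hadd).recursion A ε⟩
end

section
/- Two-point factorization of the integrand function φ at the kinematical pole: for every u ∈ ℂ with u ∉ πi·ℤ, e^{u/2}·Γ((u + 2πi)/(2πi))·Γ((u + πi)/(−2πi)) · e^{(u−πi)/2}·Γ((u + πi)/(2πi))·Γ(u/(−2πi)) = −(2πi)³ / ((u + πi)·(1 − e^{−2u})). -/
open Complex

/-!
In the variable `z = u / (2πi)` the four Gamma factors form the pairs `Γ(z + 1) Γ(-z)` and
`Γ(z + 1/2) Γ(-(z + 1/2))`. Euler's reflection formula evaluates them through `sin πz` and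
`sin π(z + 1/2) = cos πz`, and the double-angle formula merges these into `sin 2πz = -i sinh u`.
The exponential prefactors contribute `-i e^u`, and `e^u / sinh u = 2 / (1 - e^{-2u})`.
-/

theorem Gamma_add_one_mul_Gamma_neg (z : ℂ) :
    Gamma (z + 1) * Gamma (-z) = -(Real.pi / sin (Real.pi * z)) := by
  have reflection := Gamma_mul_Gamma_one_sub (-z)
  rw [sub_neg_eq_add, add_comm 1 z, mul_neg, sin_neg, div_neg] at reflection
  rw [mul_comm, reflection]

-- At `z = 0` both sides are `0`, since Mathlib sets `Γ(0) = 0`.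
theorem Gamma_mul_Gamma_neg (z : ℂ) :
    Gamma z * Gamma (-z) = -(Real.pi / (z * sin (Real.pi * z))) := by
  rcases eq_or_ne z 0 with rfl | hz
  · simp
  · have shifted := Gamma_add_one_mul_Gamma_neg z
    rw [Gamma_add_one z hz, mul_assoc] at shifted
    rw [eq_div_of_mul_eq hz ((mul_comm _ z).trans shifted), neg_div, div_div, mul_comm z]

theorem Gamma_reflection_mul_Gamma_reflection_add_half (z : ℂ) :
    (Gamma (z + 1) * Gamma (-z)) * (Gamma (z + 1 / 2) * Gamma (-(z + 1 / 2))) =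
      2 * Real.pi ^ 2 / ((z + 1 / 2) * sin (2 * (Real.pi * z))) := by
  have sin_half_shift : sin (Real.pi * (z + 1 / 2)) = cos (Real.pi * z) := by
    rw [mul_add, mul_one_div, sin_add_pi_div_two]
  rw [Gamma_add_one_mul_Gamma_neg, Gamma_mul_Gamma_neg, sin_half_shift, sin_two_mul]
  field_simp

theorem sin_eq_neg_I_mul_sinh_mul_I (x : ℂ) : sin x = -I * sinh (x * I) := by
  rw [sinh_mul_I]
  linear_combination sin x * I_sq

theorem exp_half_mul_exp_half_sub_pi_mul_I (u : ℂ) :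
    exp (u / 2) * exp ((u - Real.pi * I) / 2) = -I * exp u := by
  rw [← exp_add, show u / 2 + (u - Real.pi * I) / 2 = u + -Real.pi / 2 * I by ring,
    exp_add, exp_neg_pi_div_two_mul_I, mul_comm]

theorem exp_div_sinh (u : ℂ) : exp u / sinh u = 2 / (1 - exp (-2 * u)) := by
  have factor_exp : 1 - exp (-2 * u) = exp (-u) * (2 * sinh u) := by
    rw [two_sinh, mul_sub, ← exp_add, ← exp_add, neg_add_cancel, exp_zero]
    ring_nf
  rw [factor_exp, exp_neg]
  field_simp

/-- Two-point factorization of the integrand function `φ` at the kinematical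
pole: for `u ∉ πi·ℤ`,
`e^{u/2}·Γ((u+2πi)/(2πi))·Γ((u+πi)/(−2πi))
  · e^{(u−πi)/2}·Γ((u+πi)/(2πi))·Γ(u/(−2πi))
  = −(2πi)³/((u+πi)·(1 − e^{−2u}))`. -/
theorem phi_pair_factorization (u : ℂ)
    (hu : ∀ k : ℤ, u ≠ (k : ℂ) * (Real.pi * Complex.I)) :
    (Complex.exp (u / 2) *
        Complex.Gamma ((u + 2 * Real.pi * Complex.I) / (2 * Real.pi * Complex.I)) *
        Complex.Gamma ((u + Real.pi * Complex.I) / (-(2 * Real.pi * Complex.I)))) *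
      (Complex.exp ((u - Real.pi * Complex.I) / 2) *
        Complex.Gamma ((u + Real.pi * Complex.I) / (2 * Real.pi * Complex.I)) *
        Complex.Gamma (u / (-(2 * Real.pi * Complex.I)))) =
    -(2 * Real.pi * Complex.I) ^ 3 /
      ((u + Real.pi * Complex.I) * (1 - Complex.exp (-2 * u))) := by
  set c : ℂ := 2 * Real.pi * I with hc
  have c_ne_zero : c ≠ 0 := two_pi_I_ne_zero
  obtain ⟨z, rfl⟩ : ∃ z, u = c * z := ⟨u / c, (mul_div_cancel₀ u c_ne_zero).symm⟩
  have add_pi_mul_I : c * z + Real.pi * I = c * (z + 1 / 2) := by rw [hc]; ring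
  have sin_eq : sin (2 * (Real.pi * z)) = -I * sinh (c * z) := by
    rw [sin_eq_neg_I_mul_sinh_mul_I, hc]
    ring_nf
  have c_sq : c ^ 2 = -(4 * Real.pi ^ 2) := by rw [hc, mul_pow, I_sq]; ring
  rw [add_pi_mul_I, ← mul_add_one, div_neg, div_neg, mul_div_cancel_left₀ _ c_ne_zero,
    mul_div_cancel_left₀ _ c_ne_zero, mul_div_cancel_left₀ _ c_ne_zero]
  calc
    _ = exp (c * z / 2) * exp ((c * z - Real.pi * I) / 2) *
          ((Gamma (z + 1) * Gamma (-z)) * (Gamma (z + 1 / 2) * Gamma (-(z + 1 / 2)))) := by ring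
    _ = 2 * Real.pi ^ 2 / (z + 1 / 2) * (exp (c * z) / sinh (c * z)) := by
      rw [exp_half_mul_exp_half_sub_pi_mul_I, Gamma_reflection_mul_Gamma_reflection_add_half,
        sin_eq]
      field_simp
    _ = -c ^ 2 / ((z + 1 / 2) * (1 - exp (-2 * (c * z)))) := by
      rw [exp_div_sinh, c_sq, div_mul_div_comm]
      ring
    _ = -c ^ 3 / (c * (z + 1 / 2) * (1 - exp (-2 * (c * z)))) := by field_simp
end

section
/- Gamma-product identity for the residue constant U_n: let n ≥ 2 be an even integer and let γ, β₁,…,β_{n−2} ∈ ℂ satisfy γ − β_j ∉ πi·ℤ for all j. Then (2πi)^{−(n−2)} · ∏_{j=1}^{n−2} [ e^{(γ−β_j)/2}·Γ((γ−β_j+2πi)/(2πi))·Γ((γ−β_j+πi)/(−2πi))·(γ−β_j+πi)/(γ−β_j) ] = (−2π)^{n/2−1} · e^{(1/2)·∑_{j=1}^{n−2}(γ−β_j)} · ∏_{j=1}^{n−2} [ Γ₁(−i(β_j−γ)+π) · Γ₁(i(β_j−γ)) ]. -/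
open Complex Finset

/-- `Γ₁(x) := (2π)^{x/(2π) − 1}·Γ(x/(2π))`, with the principal complex power
of the positive real number `2π`. -/
noncomputable def Gamma1 (x : ℂ) : ℂ :=
  (2 * (Real.pi : ℂ)) ^ (x / (2 * Real.pi) - 1) * Complex.Gamma (x / (2 * Real.pi))

/-!
Put `x = γ - β_j = 2πi z` and `w = -z - 1/2`. Up to the exponential, the `j`-th factor on the left
is `-Γ(z + 1) Γ(w) w / z = -Γ(z) Γ(w + 1)`, while `Γ₁(i x + π) Γ₁(-i x)` is
`Γ₁(2π(w + 1)) Γ₁(2πz) = (2π)^(-3/2) Γ(w + 1) Γ(z)`. Hence each factor contributes the constant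
`-(2πi)⁻¹ (2π)^(3/2) = i √(2π)`, and an even number of factors pair up through `(i √(2π))² = -2π`.
-/

lemma two_mul_pi_ne_zero : (2 * Real.pi : ℂ) ≠ 0 :=
  mul_ne_zero two_ne_zero (ofReal_ne_zero.mpr Real.pi_ne_zero)

lemma Gamma_add_one_mul_Gamma_mul_div {z w : ℂ} (hz : z ≠ 0) (hw : w ≠ 0) :
    Gamma (z + 1) * Gamma w * (w / z) = Gamma z * Gamma (w + 1) := by
  rw [Gamma_add_one z hz, Gamma_add_one w hw]
  field_simp

lemma Gamma1_two_pi_mul (z : ℂ) :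
    Gamma1 (2 * Real.pi * z) = (2 * Real.pi : ℂ) ^ (z - 1) * Gamma z := by
  rw [Gamma1, mul_div_cancel_left₀ z two_mul_pi_ne_zero]

lemma Gamma1_two_pi_mul_mul_Gamma1_two_pi_mul (z w : ℂ) :
    Gamma1 (2 * Real.pi * z) * Gamma1 (2 * Real.pi * w) =
      (2 * Real.pi : ℂ) ^ (z + w - 2) * (Gamma z * Gamma w) := by
  have hexp : z + w - 2 = (z - 1) + (w - 1) := by ring
  rw [Gamma1_two_pi_mul, Gamma1_two_pi_mul, hexp, cpow_add _ _ two_mul_pi_ne_zero]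
  ring

lemma I_mul_two_pi_cpow_half_sq : (I * (2 * Real.pi : ℂ) ^ (2⁻¹ : ℂ)) ^ 2 = -2 * Real.pi := by
  rw [mul_pow, I_sq, cpow_ofNat_inv_pow]
  ring

lemma I_mul_two_pi_cpow_half_pow_sub_two {n : ℕ} (hn : Even n) :
    (I * (2 * Real.pi : ℂ) ^ (2⁻¹ : ℂ)) ^ (n - 2) = (-2 * Real.pi) ^ (n / 2 - 1) := by
  have hexp : n - 2 = 2 * (n / 2 - 1) := by grind
  rw [hexp, pow_mul, I_mul_two_pi_cpow_half_sq]

lemma I_mul_two_pi_cpow_half_mul_cpow :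
    I * (2 * Real.pi : ℂ) ^ (2⁻¹ : ℂ) * (2 * Real.pi : ℂ) ^ (-3 / 2 : ℂ) =
      -(2 * Real.pi * I)⁻¹ := by
  have hexp : (2⁻¹ + -3 / 2 : ℂ) = -1 := by norm_num
  rw [mul_assoc, ← cpow_add _ _ two_mul_pi_ne_zero, hexp, cpow_neg_one, mul_inv _ I, inv_I]
  ring

lemma inv_two_pi_I_mul_Gamma_mul_Gamma {z w : ℂ} (hz : z ≠ 0) (hw : w ≠ 0)
    (hzw : z + w = -1 / 2) :
    (2 * Real.pi * I)⁻¹ * (Gamma (z + 1) * Gamma w * -(w / z)) =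
      I * (2 * Real.pi : ℂ) ^ (2⁻¹ : ℂ) *
        (Gamma1 (2 * Real.pi * (w + 1)) * Gamma1 (2 * Real.pi * z)) := by
  have hexp : w + 1 + z - 2 = -3 / 2 := by linear_combination hzw
  calc (2 * Real.pi * I)⁻¹ * (Gamma (z + 1) * Gamma w * -(w / z))
    _ = -(2 * Real.pi * I)⁻¹ * (Gamma (w + 1) * Gamma z) := by
      rw [mul_neg, Gamma_add_one_mul_Gamma_mul_div hz hw]
      ring
    _ = I * (2 * Real.pi : ℂ) ^ (2⁻¹ : ℂ) *
          (Gamma1 (2 * Real.pi * (w + 1)) * Gamma1 (2 * Real.pi * z)) := by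
      rw [Gamma1_two_pi_mul_mul_Gamma1_two_pi_mul, hexp, ← I_mul_two_pi_cpow_half_mul_cpow,
        mul_assoc (I * _)]

lemma inv_two_pi_I_mul_Gamma_div_mul_Gamma_div {x : ℂ} (hx : x ≠ 0)
    (hxpi : x + Real.pi * I ≠ 0) :
    (2 * Real.pi * I)⁻¹ * (Gamma ((x + 2 * Real.pi * I) / (2 * Real.pi * I)) *
        Gamma ((x + Real.pi * I) / (-(2 * Real.pi * I))) * ((x + Real.pi * I) / x)) =
      I * (2 * Real.pi : ℂ) ^ (2⁻¹ : ℂ) *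
        (Gamma1 (I * x + Real.pi) * Gamma1 (-(I * x))) := by
  have hpi : (Real.pi : ℂ) ≠ 0 := ofReal_ne_zero.mpr Real.pi_ne_zero
  obtain ⟨z, rfl⟩ : ∃ z, x = 2 * Real.pi * I * z :=
    ⟨x / (2 * Real.pi * I), (mul_div_cancel₀ x two_pi_I_ne_zero).symm⟩
  have hz : z ≠ 0 := right_ne_zero_of_mul hx
  have hw : -z - 1 / 2 ≠ 0 := fun h => hxpi (by linear_combination (-2 * Real.pi * I) * h)
  have hshift : (2 * Real.pi * I * z + 2 * Real.pi * I) / (2 * Real.pi * I) = z + 1 := by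
    field_simp
  have hreflect :
      (2 * Real.pi * I * z + Real.pi * I) / (-(2 * Real.pi * I)) = -z - 1 / 2 := by
    field_simp
    ring
  have hratio : (2 * Real.pi * I * z + Real.pi * I) / (2 * Real.pi * I * z) =
      -((-z - 1 / 2) / z) := by
    field_simp
    ring
  have hleft : I * (2 * Real.pi * I * z) + Real.pi = 2 * Real.pi * (-z - 1 / 2 + 1) := by
    linear_combination (2 * Real.pi * z) * I_sq
  have hright : -(I * (2 * Real.pi * I * z)) = 2 * Real.pi * z := by
    linear_combination (-2 * Real.pi * z) * I_sq
  rw [hshift, hreflect, hratio, hleft, hright]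
  exact inv_two_pi_I_mul_Gamma_mul_Gamma hz hw (by ring)

/- The points excluded are exactly those where a factor on the left is undefined: in `hleft` the
zero of the denominator and the poles of the first Gamma factor, in `hright` the poles of the
second. -/
theorem gamma_product_Un_general {ι : Type*} (s : Finset ι) (x : ι → ℂ)
    (hleft : ∀ j ∈ s, ∀ k : ℕ, x j ≠ -(2 * k) * (Real.pi * I))
    (hright : ∀ j ∈ s, ∀ k : ℕ, x j ≠ (2 * k - 1) * (Real.pi * I)) :
    (2 * Real.pi * I) ^ (-(#s : ℤ)) *
        ∏ j ∈ s, (exp (x j / 2) * Gamma ((x j + 2 * Real.pi * I) / (2 * Real.pi * I)) *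
          Gamma ((x j + Real.pi * I) / (-(2 * Real.pi * I))) * ((x j + Real.pi * I) / x j)) =
      (I * (2 * Real.pi : ℂ) ^ (2⁻¹ : ℂ)) ^ #s * exp ((1 / 2) * ∑ j ∈ s, x j) *
        ∏ j ∈ s, (Gamma1 (I * x j + Real.pi) * Gamma1 (-(I * x j))) := by
  rw [zpow_neg, zpow_natCast, ← inv_pow, mul_sum, exp_sum, ← prod_const, ← prod_const,
    ← prod_mul_distrib, ← prod_mul_distrib, ← prod_mul_distrib]
  refine prod_congr rfl fun j hj => ?_
  have hx : x j ≠ 0 := by simpa using hleft j hj 0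
  have hxpi : x j + Real.pi * I ≠ 0 := fun h =>
    hright j hj 0 (by push_cast; linear_combination h)
  have hexp : 1 / 2 * x j = x j / 2 := by ring
  rw [hexp]
  linear_combination exp (x j / 2) * inv_two_pi_I_mul_Gamma_div_mul_Gamma_div hx hxpi

/-- Gamma-product identity for the residue constant `U_n`: for even `n ≥ 2`
and `γ − β_j ∉ πi·ℤ`,
`(2πi)^{−(n−2)}·∏_j [e^{(γ−β_j)/2}·Γ((γ−β_j+2πi)/(2πi))·Γ((γ−β_j+πi)/(−2πi))
    ·(γ−β_j+πi)/(γ−β_j)]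
 = (−2π)^{n/2−1}·e^{(1/2)∑_j(γ−β_j)}·∏_j [Γ₁(−i(β_j−γ)+π)·Γ₁(i(β_j−γ))]`. -/
theorem gamma_product_Un (n : ℕ) (hn : Even n) (h2 : 2 ≤ n)
    (γ : ℂ) (β : Fin (n - 2) → ℂ)
    (h : ∀ j (k : ℤ), γ - β j ≠ (k : ℂ) * (Real.pi * Complex.I)) :
    (2 * Real.pi * Complex.I) ^ (-((n : ℤ) - 2)) *
        ∏ j, (Complex.exp ((γ - β j) / 2) *
          Complex.Gamma ((γ - β j + 2 * Real.pi * Complex.I) / (2 * Real.pi * Complex.I)) *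
          Complex.Gamma ((γ - β j + Real.pi * Complex.I) / (-(2 * Real.pi * Complex.I))) *
          ((γ - β j + Real.pi * Complex.I) / (γ - β j))) =
      (-2 * Real.pi : ℂ) ^ (n / 2 - 1) *
        Complex.exp ((1 / 2) * ∑ j, (γ - β j)) *
        ∏ j, (Gamma1 (-Complex.I * (β j - γ) + Real.pi) *
          Gamma1 (Complex.I * (β j - γ))) := by
  have hgeneral := gamma_product_Un_general univ (fun j => γ - β j)
    (fun j _ k => by exact_mod_cast h j (-(2 * k))) (fun j _ k => by exact_mod_cast h j (2 * k - 1))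
  have hrotate (j) : I * (β j - γ) = -(I * (γ - β j)) := by ring
  simpa only [card_univ, Fintype.card_fin, Nat.cast_sub h2, Nat.cast_ofNat,
    I_mul_two_pi_cpow_half_pow_sub_two hn, neg_mul, hrotate, neg_neg] using hgeneral
end
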